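/- For each non-negative integer m equip the set of all Ferrers diagrams of half-perimeter m + 2 with the uniform probability distribution, and let A_m and H_m denote the area and height (number of rows) random variables. Set X_m = (A_m − m²/8)/√(m³/48) and Y_m = (H_m − m/2)/(√m/2). Then, as m → ∞, the pair (X_m, Y_m) converges in distribution to the two-dimensional standard normal distribution, i.e. to the product on ℝ² of two standard Gaussian measures (each with mean 0 and variance 1). -/

import Mathlib

/-!
A Ferrers diagram of half-perimeter `m + 2` is determined by its boundary path, read from the
bottom-left corner: a horizontal step, `m` free steps, and a vertical step. If `T` is the set of
free steps (indexed by `0, …, m - 1`) that are vertical, then `T` is an arbitrary subset of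
`range m` (`sum_ferrers`), the height is `|T| + 1` and the area is
`m + ∑ T + (|T| + 1) - |T| (|T| + 1) / 2` (`heightF_diagOf`, `areaF_diagOf`).

Let `s_j = ± 1` be the sign recording whether `j ∈ T`; under the uniform distribution the signs
are independent and fair. With `S = ∑ s_j` the two statistics become
`A = m² / 8 + (1 / 4) ∑ s_j (2 j + 1 - m) + (m + 1 - S² / 8)` and `H = m / 2 + S / 2 + 1`.
Since `E S² = m`, the bracket in `A` is negligible after division by `√(m³ / 48)`
(`sum_abs_remF_le`), and `t X_m + u Y_m` is, up to an error tending to `0` in mean, a linear form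
`∑ c_j s_j` with `c_j = O(m^(-1/2))` and `∑ c_j² → t² + u²` (`sum_coefF_sq`).

The characteristic function of the linear form is `∏ cos c_j` (`sum_exp_sgn`), which differs from
`exp (- ∑ c_j² / 2)` by at most `∑ c_j⁴ = O(1 / m)` (`abs_prod_cos_sub_le`). Hence the
characteristic functions converge to `exp (- (t² + u²) / 2)` (`tendsto_charSum`), and Lévy's
convergence theorem on the Euclidean plane gives the weak convergence.
-/

open Finset Filter MeasureTheory

/-- Ferrers diagrams of half-perimeter `m + 2`, encoded as weakly decreasing sequences of
row lengths padded with zeros: `p i` is the length of row `i + 1` (rows are indexed so that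
row lengths weakly decrease), the height is the number of nonzero rows, the width is `p 0`,
and the half-perimeter (height plus width) equals `m + 2`. -/
def FerrersHP (m : ℕ) : Finset (Fin (m + 1) → Fin (m + 2)) :=
  Finset.univ.filter fun p =>
    (∀ i j : Fin (m + 1), i ≤ j → (p j : ℕ) ≤ (p i : ℕ)) ∧
    (Finset.univ.filter fun i : Fin (m + 1) => 1 ≤ (p i : ℕ)).card + (p 0 : ℕ) = m + 2

/-- The height (number of rows) of a Ferrers diagram in this encoding. -/
def heightF {m : ℕ} (p : Fin (m + 1) → Fin (m + 2)) : ℕ :=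
  (Finset.univ.filter fun i : Fin (m + 1) => 1 ≤ (p i : ℕ)).card

/-- The area of a Ferrers diagram in this encoding. -/
def areaF {m : ℕ} (p : Fin (m + 1) → Fin (m + 2)) : ℕ := ∑ i, (p i : ℕ)

/-! ### Diagrams as subsets of boundary steps -/

/-- The `a`-th smallest element (counting from `0`) of a finite set of naturals, and `0` when
`a` is out of range. -/
noncomputable def enumF (V : Finset ℕ) (a : ℕ) : ℕ :=
  if h : a < V.card then V.orderEmbOfFin rfl ⟨a, h⟩ else 0

lemma enumF_mem {V : Finset ℕ} {a : ℕ} (h : a < V.card) : enumF V a ∈ V := by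
  simp [enumF, h]

lemma enumF_lt {V : Finset ℕ} {a b : ℕ} (h : a < b) (hb : b < V.card) :
    enumF V a < enumF V b := by
  simp [enumF, hb, h.trans hb, h]

lemma exists_enumF {V : Finset ℕ} {x : ℕ} (hx : x ∈ V) : ∃ a < V.card, enumF V a = x := by
  have : x ∈ Set.range (V.orderEmbOfFin rfl) := by simpa using hx
  obtain ⟨a, ha⟩ := this
  exact ⟨a, a.2, by simp [enumF, ha]⟩

lemma enumF_image (V : Finset ℕ) : (range V.card).image (enumF V) = V := by
  ext x
  simp only [mem_image, mem_range]
  constructor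
  · rintro ⟨a, ha, rfl⟩
    exact enumF_mem ha
  · exact exists_enumF

lemma enumF_sum (V : Finset ℕ) : ∑ a ∈ range V.card, enumF V a = ∑ x ∈ V, x := by
  conv_rhs => rw [← enumF_image V]
  rw [sum_image]
  intro a ha b hb hab
  simp only [coe_range, Set.mem_Iio] at ha hb
  rcases lt_trichotomy a b with h | h | h
  · exact absurd hab (enumF_lt h hb).ne
  · exact h
  · exact absurd hab (enumF_lt h ha).ne.symm

/-- A strictly increasing sequence enumerates its own image. -/
lemma enumF_unique {k : ℕ} (y : ℕ → ℕ) (hy : ∀ a b, a < b → b < k → y a < y b) :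
    ((range k).image y).card = k ∧ ∀ a < k, enumF ((range k).image y) a = y a := by
  have hinj : Set.InjOn y (range k) := by
    intro a ha b hb hab
    simp only [coe_range, Set.mem_Iio] at ha hb
    rcases lt_trichotomy a b with h | h | h
    · exact absurd hab (hy _ _ h hb).ne
    · exact h
    · exact absurd hab (hy _ _ h ha).ne.symm
  have hc : ((range k).image y).card = k := by rw [card_image_of_injOn hinj, card_range]
  refine ⟨hc, fun a ha => ?_⟩
  have hu := orderEmbOfFin_unique (s := (range k).image y) rfl
    (f := fun i : Fin ((range k).image y).card => y i)
    (fun i => mem_image_of_mem _ (mem_range.2 (by have := i.2; omega)))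
    (fun i j hij => hy _ _ hij (by have := j.2; omega))
  have := congrFun hu ⟨a, by omega⟩
  simp only [enumF]
  rw [dif_pos (by omega)]
  exact this.symm

/-- Iterating that consecutive elements of the enumeration differ by at least `1`. -/
lemma enumF_add_le {V : Finset ℕ} {a b : ℕ} (h : a ≤ b) (hb : b < V.card) :
    enumF V a + (b - a) ≤ enumF V b := by
  induction b, h using Nat.le_induction with
  | base => simp
  | succ b hab ih =>
    have := ih (by omega)
    have := enumF_lt (Nat.lt_succ_self b) hb
    simp only [Nat.succ_eq_add_one] at this
    omega

/-- The length of row `i` (rows counted from `0`) of the diagram whose boundary path, read from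
the bottom-left corner, consists of a horizontal step, then `m` free steps of which those with
index in `T` are vertical, then a vertical step. With `e` the increasing enumeration of
`insert m T`, row `i` ends at the vertical step `e (|T| - i)`. -/
noncomputable def rowLen (m : ℕ) (T : Finset ℕ) (i : ℕ) : ℕ :=
  if i ≤ T.card then enumF (insert m T) (T.card - i) + 1 - (T.card - i) else 0

lemma card_insert_top {m : ℕ} {T : Finset ℕ} (hT : T ⊆ range m) : (insert m T).card = T.card + 1 :=
  card_insert_of_notMem fun h => by simpa using hT h

lemma card_le_of_sub {m : ℕ} {T : Finset ℕ} (hT : T ⊆ range m) : T.card ≤ m := by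
  simpa using card_le_card hT

lemma enumF_top {m : ℕ} {T : Finset ℕ} (hT : T ⊆ range m) : enumF (insert m T) T.card = m := by
  have hc := card_insert_top hT
  obtain ⟨a, ha, hm⟩ := exists_enumF (mem_insert_self m T)
  have h1 := enumF_add_le (V := insert m T) (a := a) (b := T.card) (by omega) (by omega)
  have h2 := enumF_mem (V := insert m T) (a := T.card) (by omega)
  have h3 : enumF (insert m T) T.card ≤ m := by
    rcases mem_insert.1 h2 with h | h
    · exact h.le
    · exact (mem_range.1 (hT h)).le
  omega

lemma rowLen_zero {m : ℕ} {T : Finset ℕ} (hT : T ⊆ range m) : rowLen m T 0 = m + 1 - T.card := by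
  simp [rowLen, enumF_top hT]

lemma le_enumF {m : ℕ} {T : Finset ℕ} (hT : T ⊆ range m)
    {a : ℕ} (ha : a ≤ T.card) : a ≤ enumF (insert m T) a := by
  have := enumF_add_le (V := insert m T) (a := 0) (b := a) (by omega)
    (by rw [card_insert_top hT]; omega)
  omega

lemma rowLen_pos {m : ℕ} {T : Finset ℕ} (hT : T ⊆ range m)
    {i : ℕ} : 1 ≤ rowLen m T i ↔ i ≤ T.card := by
  unfold rowLen
  split_ifs with h
  · have := le_enumF hT (a := T.card - i) (by omega)
    simp only [h, iff_true]
    omega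
  · simp [h]

lemma rowLen_anti {m : ℕ} {T : Finset ℕ} (hT : T ⊆ range m)
    {i j : ℕ} (hij : i ≤ j) : rowLen m T j ≤ rowLen m T i := by
  by_cases hj : j ≤ T.card
  · have := enumF_add_le (V := insert m T) (a := T.card - j) (b := T.card - i) (by omega)
      (by rw [card_insert_top hT]; omega)
    simp only [rowLen, hj, hij.trans hj, if_true]
    omega
  · simp [rowLen, hj]

lemma rowLen_lt {m : ℕ} {T : Finset ℕ} (hT : T ⊆ range m) (i : ℕ) : rowLen m T i < m + 2 := by
  have := rowLen_anti hT (Nat.zero_le i)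
  rw [rowLen_zero hT] at this
  omega

/-- The area of the diagram: row `i` has length `e a + 1 - a` with `a = |T| - i`, and these are
summed over the enumeration `e` of `insert m T`. -/
lemma sum_rowLen {m : ℕ} {T : Finset ℕ} (hT : T ⊆ range m) :
    (∑ i ∈ range (m + 1), rowLen m T i) + ∑ a ∈ range (T.card + 1), a
    = m + (∑ x ∈ T, x) + (T.card + 1) := by
  have hc := card_insert_top hT
  have h1 : ∑ i ∈ range (m + 1), rowLen m T i = ∑ i ∈ range (T.card + 1), rowLen m T i := by
    symm
    apply sum_subset
    · intro i hi
      have := card_le_of_sub hT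
      simp only [mem_range] at hi ⊢
      omega
    · intro i _ hi
      simp only [mem_range] at hi
      simp only [rowLen]
      rw [if_neg (by omega)]
  have h2 : ∑ i ∈ range (T.card + 1), rowLen m T i
      = ∑ a ∈ range (T.card + 1), (enumF (insert m T) a + 1 - a) := by
    rw [← sum_range_reflect]
    refine sum_congr rfl fun a ha => ?_
    simp only [mem_range] at ha
    have h3 : T.card - (T.card - a) = a := by omega
    simp [rowLen, h3]
  have h3 := enumF_sum (insert m T)
  rw [hc, sum_insert (fun h => by simpa using hT h)] at h3
  rw [h1, h2, ← sum_add_distrib, ← h3]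
  have h4 : ∀ a ∈ range (T.card + 1), enumF (insert m T) a + 1 - a + a
      = enumF (insert m T) a + 1 := by
    intro a ha
    simp only [mem_range] at ha
    have := le_enumF hT (a := a) (by omega)
    omega
  rw [sum_congr rfl h4, sum_add_distrib]
  simp

/-- The Ferrers diagram of a boundary path, in the encoding of `FerrersHP`. -/
noncomputable def diagOf (m : ℕ) (T : Finset ℕ) : Fin (m + 1) → Fin (m + 2) :=
  fun i => Fin.ofNat (m + 2) (rowLen m T i)

lemma diagOf_val {m : ℕ} {T : Finset ℕ} (hT : T ⊆ range m) (i : Fin (m + 1)) :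
    (diagOf m T i : ℕ) = rowLen m T i := by
  simp [diagOf, Nat.mod_eq_of_lt (rowLen_lt hT i)]

lemma heightF_diagOf {m : ℕ} {T : Finset ℕ} (hT : T ⊆ range m) :
    heightF (diagOf m T) = T.card + 1 := by
  have hc := card_le_of_sub hT
  simp only [heightF, diagOf_val hT, rowLen_pos hT]
  have : (Finset.univ.filter fun i : Fin (m + 1) => (i : ℕ) ≤ T.card)
      = Finset.Iic ⟨T.card, by omega⟩ := by
    ext i
    simp [Fin.le_def]
  rw [this, Fin.card_Iic]

lemma areaF_diagOf {m : ℕ} {T : Finset ℕ} (hT : T ⊆ range m) :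
    areaF (diagOf m T) + ∑ a ∈ range (T.card + 1), a = m + (∑ x ∈ T, x) + (T.card + 1) := by
  rw [← sum_rowLen hT, areaF]
  simp only [diagOf_val hT]
  rw [Fin.sum_univ_eq_sum_range (fun i => rowLen m T i)]

lemma diagOf_mem {m : ℕ} {T : Finset ℕ} (hT : T ⊆ range m) : diagOf m T ∈ FerrersHP m := by
  have hh := heightF_diagOf hT
  have hc := card_le_of_sub hT
  simp only [FerrersHP, mem_filter, mem_univ, true_and]
  refine ⟨fun i j hij => ?_, ?_⟩
  · rw [diagOf_val hT, diagOf_val hT]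
    exact rowLen_anti hT hij
  · change heightF (diagOf m T) + _ = _
    rw [hh, diagOf_val hT]
    simp only [Fin.val_zero, rowLen_zero hT]
    omega

lemma diagOf_inj {m : ℕ} {T U : Finset ℕ} (hT : T ⊆ range m) (hU : U ⊆ range m)
    (h : diagOf m T = diagOf m U) : T = U := by
  have hc : T.card = U.card := by
    have h1 := heightF_diagOf hT
    rw [h, heightF_diagOf hU] at h1
    omega
  have hcm := card_le_of_sub hT
  have hv : ∀ i ≤ m, rowLen m T i = rowLen m U i := by
    intro i hi
    rw [← diagOf_val hT ⟨i, by omega⟩, h, diagOf_val hU]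
  have hV : insert m T = insert m U := by
    rw [← enumF_image (insert m T), ← enumF_image (insert m U), card_insert_top hT,
      card_insert_top hU, ← hc]
    refine image_congr fun a ha => ?_
    simp only [coe_range, Set.mem_Iio] at ha
    have h1 := hv (T.card - a) (by omega)
    have h2 : T.card - (T.card - a) = a := by omega
    simp only [rowLen, ← hc, h2] at h1
    rw [if_pos (by omega), if_pos (by omega)] at h1
    have h3 := le_enumF hT (a := a) (by omega)
    have h4 := le_enumF hU (a := a) (by omega)
    omega
  have hmT : m ∉ T := fun h => by simpa using hT h
  have hmU : m ∉ U := fun h => by simpa using hU h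
  rw [← erase_insert hmT, hV, erase_insert hmU]

/-- The nonzero rows form an initial segment. -/
lemma pos_iff_lt_height {m : ℕ} {p : Fin (m + 1) → Fin (m + 2)}
    (hp : ∀ i j : Fin (m + 1), i ≤ j → (p j : ℕ) ≤ (p i : ℕ)) (i : Fin (m + 1)) :
    1 ≤ (p i : ℕ) ↔ (i : ℕ) < heightF p := by
  unfold heightF
  constructor
  · intro h
    have : Finset.Iic i ⊆ Finset.univ.filter fun i : Fin (m + 1) => 1 ≤ (p i : ℕ) := by
      intro j hj
      simp only [mem_filter, mem_univ, true_and]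
      exact h.trans (hp j i (mem_Iic.1 hj))
    have := card_le_card this
    rw [Fin.card_Iic] at this
    omega
  · intro h
    by_contra hn
    have : (Finset.univ.filter fun i : Fin (m + 1) => 1 ≤ (p i : ℕ)) ⊆ Finset.Iio i := by
      intro j hj
      simp only [mem_filter, mem_univ, true_and] at hj
      rw [mem_Iio]
      by_contra hij
      exact hn (hj.trans (hp i j (not_lt.1 hij)))
    have := card_le_card this
    rw [Fin.card_Iio] at this
    omega

lemma exists_diagOf {m : ℕ} {p : Fin (m + 1) → Fin (m + 2)} (hp : p ∈ FerrersHP m) :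
    ∃ T ⊆ range m, diagOf m T = p := by
  simp only [FerrersHP, mem_filter, mem_univ, true_and] at hp
  obtain ⟨hanti, hhp⟩ := hp
  change heightF p + _ = _ at hhp
  have hpos := pos_iff_lt_height hanti
  have h0 := (p 0).2
  obtain ⟨k, hk⟩ : ∃ k, heightF p = k + 1 := ⟨heightF p - 1, by omega⟩
  have hp0 : 1 ≤ (p 0 : ℕ) := by rw [hpos]; simp; omega
  rw [hk] at hhp hpos
  -- `q` extends the row lengths to all of `ℕ`; `y a` is the index of the vertical step
  -- ending row `k - a`.
  let q : ℕ → ℕ := fun i => if h : i < m + 1 then (p ⟨i, h⟩ : ℕ) else 0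
  have hqv : ∀ i : Fin (m + 1), q i = p i := fun i => dif_pos i.2
  have hq0 : q 0 = p 0 := hqv 0
  have hq_anti : ∀ i j, i ≤ j → j ≤ m → q j ≤ q i := by
    intro i j hij hj
    have h1 := hanti ⟨i, by omega⟩ ⟨j, by omega⟩ hij
    rwa [← hqv, ← hqv] at h1
  have hq_pos : ∀ i ≤ m, (1 ≤ q i ↔ i < k + 1) := by
    intro i hi
    have h1 := hpos ⟨i, by omega⟩
    rwa [← hqv] at h1
  let y : ℕ → ℕ := fun a => q (k - a) + a - 1
  have hy : ∀ a b, a < b → b < k + 1 → y a < y b := by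
    intro a b hab hb
    have h1 := hq_anti (k - b) (k - a) (by omega) (by omega)
    have h2 := (hq_pos (k - a) (by omega)).2 (by omega)
    simp only [y]
    omega
  have hyk : y k = m := by
    simp only [y, Nat.sub_self, hq0]
    omega
  obtain ⟨hTc, -⟩ := enumF_unique (k := k) y fun a b h1 h2 => hy a b h1 (by omega)
  obtain ⟨-, hVe⟩ := enumF_unique (k := k + 1) y hy
  have hV : insert m ((range k).image y) = (range (k + 1)).image y := by
    rw [range_add_one, image_insert, hyk]
  have hTsub : (range k).image y ⊆ range m := by
    intro x hx
    obtain ⟨a, ha, rfl⟩ := mem_image.1 hx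
    rw [mem_range] at ha ⊢
    rw [← hyk]
    exact hy a k ha (by omega)
  refine ⟨(range k).image y, hTsub, ?_⟩
  ext i
  rw [diagOf_val hTsub, rowLen, hTc, hV, ← hqv]
  have hi := i.2
  split_ifs with h
  · rw [hVe _ (by omega)]
    have h2 := (hq_pos i (by omega)).2 (by omega)
    have h3 : k - (k - (i : ℕ)) = i := by omega
    simp only [y, h3]
    omega
  · have h2 := (hq_pos i (by omega)).not.2 (by omega)
    omega

/-- Diagrams of half-perimeter `m + 2` correspond to subsets of the `m` free boundary steps. -/
lemma sum_ferrers {M : Type*} [AddCommMonoid M] (m : ℕ)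
    (F : (Fin (m + 1) → Fin (m + 2)) → M) :
    ∑ p ∈ FerrersHP m, F p = ∑ T ∈ (range m).powerset, F (diagOf m T) := by
  symm
  refine sum_bij (fun T _ => diagOf m T) ?_ ?_ ?_ ?_
  · exact fun T hT => diagOf_mem (mem_powerset.1 hT)
  · exact fun T hT U hU h => diagOf_inj (mem_powerset.1 hT) (mem_powerset.1 hU) h
  · intro p hp
    obtain ⟨T, hT, h⟩ := exists_diagOf hp
    exact ⟨T, mem_powerset.2 hT, h⟩
  · exact fun _ _ => rfl

lemma card_ferrers (m : ℕ) : (FerrersHP m).card = 2 ^ m := by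
  rw [card_eq_sum_ones, sum_ferrers]
  simp

open Topology

/-! ### Random signs -/

/-- The sign of step `j`: `1` when the step is vertical, `-1` when it is horizontal. -/
def sgn (T : Finset ℕ) (j : ℕ) : ℝ := if j ∈ T then 1 else -1

lemma sum_sgn_mul {m : ℕ} {T : Finset ℕ} (hT : T ⊆ range m) (c : ℕ → ℝ) :
    ∑ j ∈ range m, sgn T j * c j = 2 * ∑ j ∈ T, c j - ∑ j ∈ range m, c j := by
  have h1 : ∀ j, sgn T j * c j = 2 * (if j ∈ T then c j else 0) - c j := by
    intro j
    unfold sgn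
    split_ifs <;> ring
  simp only [h1]
  rw [sum_sub_distrib, ← mul_sum, sum_ite_mem, inter_eq_right.2 hT]

/-- Independence of the signs: the characteristic function of a linear combination of uniform
random signs is a product of cosines. -/
lemma sum_exp_sgn (m : ℕ) (c : ℕ → ℝ) :
    ∑ T ∈ (range m).powerset,
        Complex.exp (((∑ j ∈ range m, sgn T j * c j : ℝ) : ℂ) * Complex.I)
      = 2 ^ m * ((∏ j ∈ range m, Real.cos (c j) : ℝ) : ℂ) := by
  have h1 : ∀ j, 2 * Complex.cos (c j)
      = Complex.exp ((c j : ℂ) * Complex.I) + Complex.exp (-(c j : ℂ) * Complex.I) := by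
    intro j
    rw [Complex.two_cos]
  have h2 : (2 : ℂ) ^ m * ((∏ j ∈ range m, Real.cos (c j) : ℝ) : ℂ)
      = ∏ j ∈ range m, (2 * Complex.cos (c j)) := by
    rw [prod_mul_distrib]
    simp
  rw [h2]
  simp only [h1]
  rw [prod_add]
  refine sum_congr rfl fun T hT => ?_
  have hT' := mem_powerset.1 hT
  rw [← Complex.exp_sum, ← Complex.exp_sum, ← Complex.exp_add, ← sum_mul, ← sum_mul, ← add_mul,
    ← sum_sdiff hT']
  congr 2
  push_cast
  rw [add_comm]
  congr 1
  · refine sum_congr rfl fun j hj => ?_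
    simp [sgn, hj]
  · refine sum_congr rfl fun j hj => ?_
    simp [sgn, (mem_sdiff.1 hj).2]

/-- The sum of the signs has second moment `m`. -/
lemma sum_sq_card (s : Finset ℕ) :
    ∑ T ∈ s.powerset, (2 * (T.card : ℝ) - s.card) ^ 2 = (s.card : ℝ) * 2 ^ s.card := by
  induction s using Finset.induction_on with
  | empty => simp
  | insert a s ha ih =>
    rw [sum_powerset_insert ha, ← sum_add_distrib, card_insert_of_notMem ha]
    have h1 : ∀ T ∈ s.powerset, (2 * (T.card : ℝ) - ((s.card + 1 : ℕ) : ℝ)) ^ 2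
        + (2 * ((insert a T).card : ℝ) - ((s.card + 1 : ℕ) : ℝ)) ^ 2
        = 2 * (2 * (T.card : ℝ) - s.card) ^ 2 + 2 := by
      intro T hT
      rw [card_insert_of_notMem fun h => ha (mem_powerset.1 hT h)]
      push_cast
      ring
    rw [sum_congr rfl h1, sum_add_distrib, ← mul_sum, ih]
    simp only [sum_const, card_powerset, nsmul_eq_mul]
    push_cast
    ring

lemma abs_prod_sub_prod_le (s : Finset ℕ) (a b : ℕ → ℝ) (ha : ∀ j ∈ s, |a j| ≤ 1)
    (hb : ∀ j ∈ s, |b j| ≤ 1) :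
    |∏ j ∈ s, a j - ∏ j ∈ s, b j| ≤ ∑ j ∈ s, |a j - b j| := by
  induction s using Finset.induction_on with
  | empty => simp
  | insert i s hi ih =>
    rw [prod_insert hi, prod_insert hi, sum_insert hi]
    have ih' := ih (fun j hj => ha j (mem_insert_of_mem hj))
      (fun j hj => hb j (mem_insert_of_mem hj))
    have h1 : |∏ j ∈ s, b j| ≤ 1 := by
      rw [abs_prod]
      exact prod_le_one (fun _ _ => abs_nonneg _) fun j hj => hb j (mem_insert_of_mem hj)
    have h2 := ha i (mem_insert_self _ _)
    calc |a i * ∏ j ∈ s, a j - b i * ∏ j ∈ s, b j|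
        = |(a i - b i) * ∏ j ∈ s, b j + a i * (∏ j ∈ s, a j - ∏ j ∈ s, b j)| := by
          congr 1; ring
      _ ≤ |a i - b i| * |∏ j ∈ s, b j| + |a i| * |∏ j ∈ s, a j - ∏ j ∈ s, b j| := by
          rw [← abs_mul, ← abs_mul]; exact abs_add_le _ _
      _ ≤ |a i - b i| * 1 + 1 * |∏ j ∈ s, a j - ∏ j ∈ s, b j| := by gcongr
      _ ≤ _ := by linarith

lemma abs_cos_sub_exp_le {x : ℝ} (hx : |x| ≤ 1) :
    |Real.cos x - Real.exp (-x ^ 2 / 2)| ≤ x ^ 4 := by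
  have h1 := Real.cos_bound hx
  have hx2 : x ^ 2 ≤ 1 := by rw [← sq_abs]; exact pow_le_one₀ (abs_nonneg x) hx
  have h2 := Real.abs_exp_sub_one_sub_id_le (x := -x ^ 2 / 2)
    (by rw [abs_le]; constructor <;> nlinarith [sq_nonneg x])
  have h3 : |x| ^ 4 = x ^ 4 := by rw [← abs_pow, abs_of_nonneg (by positivity)]
  rw [h3] at h1
  rw [abs_le] at *
  constructor <;> nlinarith [sq_nonneg (x ^ 2)]

lemma sum_lin (m : ℝ) (n : ℕ) :
    ∑ j ∈ range n, (2 * (j : ℝ) + 1 - m) = n ^ 2 - n * m := by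
  induction n with
  | zero => simp
  | succ n ih => rw [sum_range_succ, ih]; push_cast; ring

lemma sum_lin_sq (m : ℝ) (n : ℕ) :
    ∑ j ∈ range n, (2 * (j : ℝ) + 1 - m) ^ 2
      = n * (4 * n ^ 2 - 1) / 3 - 2 * m * n ^ 2 + n * m ^ 2 := by
  induction n with
  | zero => simp
  | succ n ih => rw [sum_range_succ, ih]; push_cast; ring

/-! ### The characteristic function of the normalized pair -/

/-- The area as a linear form in the signs plus a function of `|T|`. The sum of all signs is
`S = 2 |T| - m`, so the nonlinear part is `m + 1 - S ^ 2 / 8`. -/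
lemma areaF_real {m : ℕ} {T : Finset ℕ} (hT : T ⊆ range m) :
    (areaF (diagOf m T) : ℝ) - m ^ 2 / 8
      = (∑ j ∈ range m, sgn T j * (2 * (j : ℝ) + 1 - m)) / 4
        + (m + 1 - (2 * (T.card : ℝ) - m) ^ 2 / 8) := by
  have h1 := areaF_diagOf hT
  have h2 : (∑ a ∈ range (T.card + 1), (a : ℝ)) = (T.card + 1) * T.card / 2 := by
    have := sum_range_id_mul_two (T.card + 1)
    have h3 : ((∑ a ∈ range (T.card + 1), (a : ℝ))) * 2 = (T.card + 1) * T.card := by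
      have h4 : ((∑ a ∈ range (T.card + 1), a : ℕ) : ℝ) * 2 = (T.card + 1 : ℕ) * T.card := by
        exact_mod_cast this
      push_cast at h4
      exact h4
    linarith
  have h3 : (areaF (diagOf m T) : ℝ) + ∑ a ∈ range (T.card + 1), (a : ℝ)
      = m + (∑ x ∈ T, (x : ℝ)) + (T.card + 1) := by
    have h4 := congrArg (Nat.cast : ℕ → ℝ) h1
    push_cast at h4
    exact h4
  rw [sum_sgn_mul hT, sum_lin, sum_sub_distrib, sum_add_distrib, ← mul_sum]
  simp only [sum_const, nsmul_eq_mul]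
  rw [h2] at h3
  linarith

/-- The coefficient of the `j`-th sign in the linear part of `t X_m + u Y_m`. -/
noncomputable def coefF (t u : ℝ) (m j : ℕ) : ℝ :=
  (t * √3 * (2 * (j : ℝ) + 1 - m) / m + u) / √m

/-- The nonlinear remainder of `t X_m + u Y_m`, a function of the number of vertical steps. -/
noncomputable def remF (t u : ℝ) (m k : ℕ) : ℝ :=
  t * ((m + 1 - (2 * (k : ℝ) - m) ^ 2 / 8) / √(m ^ 3 / 48)) + u * (2 / √m)

lemma sqrt_cube {m : ℕ} : √((m : ℝ) ^ 3 / 48) = m * √m / (4 * √3) := by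
  have hw : √(m : ℝ) ^ 2 = m := Real.sq_sqrt (Nat.cast_nonneg m)
  have h33 : √(3 : ℝ) ^ 2 = 3 := Real.sq_sqrt (by norm_num)
  rw [Real.sqrt_eq_iff_mul_self_eq (by positivity) (by positivity), ← sq, div_pow, mul_pow,
    mul_pow, hw, h33]
  ring

/-- `t X_m + u Y_m` as a linear form in the signs plus the remainder `remF`. -/
lemma stat_eq {m : ℕ} (hm : 0 < m) {T : Finset ℕ} (hT : T ⊆ range m) (t u : ℝ) :
    ((areaF (diagOf m T) : ℝ) - m ^ 2 / 8) / √(m ^ 3 / 48) * t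
        + ((heightF (diagOf m T) : ℝ) - m / 2) / (√m / 2) * u
      = (∑ j ∈ range m, sgn T j * coefF t u m j) + remF t u m T.card := by
  have hm' : (0 : ℝ) < m := by exact_mod_cast hm
  have hw : 0 < √(m : ℝ) := Real.sqrt_pos.2 hm'
  have h3 : 0 < √(3 : ℝ) := by positivity
  have h33 : √(3 : ℝ) ^ 2 = 3 := Real.sq_sqrt (by norm_num)
  have hS : ∑ j ∈ range m, sgn T j = 2 * (T.card : ℝ) - m := by
    have := sum_sgn_mul hT fun _ => 1
    simpa using this
  have hsum : ∑ j ∈ range m, sgn T j * coefF t u m j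
      = t * √3 / (m * √m) * (∑ j ∈ range m, sgn T j * (2 * (j : ℝ) + 1 - m))
        + u / √m * (2 * (T.card : ℝ) - m) := by
    rw [← hS, mul_sum, mul_sum, ← sum_add_distrib]
    refine sum_congr rfl fun j _ => ?_
    unfold coefF
    field_simp
  rw [areaF_real hT, heightF_diagOf hT, hsum, remF, sqrt_cube]
  push_cast
  field_simp
  ring

/-- The linear part has variance tending to `t ^ 2 + u ^ 2`; the cross term vanishes because
`∑ (2 j + 1 - m) = 0`. -/
lemma sum_coefF_sq {m : ℕ} (hm : 0 < m) (t u : ℝ) :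
    ∑ j ∈ range m, coefF t u m j ^ 2 = t ^ 2 * (1 - 1 / (m : ℝ) ^ 2) + u ^ 2 := by
  have hm' : (0 : ℝ) < m := by exact_mod_cast hm
  have hw : √(m : ℝ) ^ 2 = m := Real.sq_sqrt hm'.le
  have h33 : √(3 : ℝ) ^ 2 = 3 := Real.sq_sqrt (by norm_num)
  have h1 : ∀ j ∈ range m, coefF t u m j ^ 2
      = 3 * t ^ 2 / m ^ 3 * (2 * (j : ℝ) + 1 - m) ^ 2
        + 2 * t * √3 * u / m ^ 2 * (2 * (j : ℝ) + 1 - m) + u ^ 2 / m := by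
    intro j _
    rw [coefF, div_pow, hw, add_sq, div_pow, mul_pow, mul_pow, h33]
    field_simp
  rw [sum_congr rfl h1, sum_add_distrib, sum_add_distrib, ← mul_sum, ← mul_sum, sum_lin,
    sum_lin_sq]
  simp only [sum_const, card_range, nsmul_eq_mul]
  field_simp
  ring

lemma abs_coefF_le {m j : ℕ} (hj : j ∈ range m) (t u : ℝ) :
    |coefF t u m j| ≤ (2 * |t| + |u|) / √m := by
  have hj' : j < m := mem_range.1 hj
  have hm' : (0 : ℝ) < m := by exact_mod_cast (by omega : 0 < m)
  have hjm : (j : ℝ) + 1 ≤ m := by exact_mod_cast hj'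
  have h0 : (0 : ℝ) ≤ j := by positivity
  have h3 : √(3 : ℝ) ≤ 2 := by rw [Real.sqrt_le_left (by norm_num)]; norm_num
  rw [coefF, abs_div, abs_of_nonneg (Real.sqrt_nonneg (m : ℝ))]
  gcongr
  refine (abs_add_le _ _).trans ?_
  gcongr
  rw [abs_div, abs_mul, abs_mul, abs_of_nonneg (Real.sqrt_nonneg (3 : ℝ)), abs_of_pos hm',
    div_le_iff₀ hm']
  have h4 : |2 * (j : ℝ) + 1 - m| ≤ m := by
    rw [abs_le]; constructor <;> linarith
  calc |t| * √3 * |2 * (j : ℝ) + 1 - m| ≤ |t| * 2 * m := by gcongr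
    _ = _ := by ring

lemma abs_prod_cos_sub_le {m : ℕ} (t u : ℝ) (hm : (2 * |t| + |u|) ^ 2 ≤ m) :
    |∏ j ∈ range m, Real.cos (coefF t u m j)
        - Real.exp (-(∑ j ∈ range m, coefF t u m j ^ 2) / 2)| ≤ (2 * |t| + |u|) ^ 4 / m := by
  rcases Nat.eq_zero_or_pos m with rfl | hm0
  · simp
  have hm' : (0 : ℝ) < m := by exact_mod_cast hm0
  have hw : 0 < √(m : ℝ) := Real.sqrt_pos.2 hm'
  have hw2 : √(m : ℝ) ^ 2 = m := Real.sq_sqrt hm'.le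
  have h1 : Real.exp (-(∑ j ∈ range m, coefF t u m j ^ 2) / 2)
      = ∏ j ∈ range m, Real.exp (-coefF t u m j ^ 2 / 2) := by
    rw [← Real.exp_sum, ← sum_neg_distrib, sum_div]
  rw [h1]
  refine (abs_prod_sub_prod_le _ _ _ (fun j _ => Real.abs_cos_le_one _) fun j _ => ?_).trans ?_
  · rw [abs_of_pos (Real.exp_pos _), Real.exp_le_one_iff]
    nlinarith [sq_nonneg (coefF t u m j)]
  · have h2 : ∀ j ∈ range m, |Real.cos (coefF t u m j) - Real.exp (-coefF t u m j ^ 2 / 2)|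
        ≤ (2 * |t| + |u|) ^ 4 / m ^ 2 := by
      intro j hj
      have hc := abs_coefF_le hj t u
      have hc1 : |coefF t u m j| ≤ 1 := by
        refine hc.trans ?_
        rw [div_le_one hw]
        exact Real.le_sqrt_of_sq_le hm
      refine (abs_cos_sub_exp_le hc1).trans ?_
      calc coefF t u m j ^ 4 = |coefF t u m j| ^ 4 := by
            rw [← abs_pow, abs_of_nonneg (by positivity)]
        _ ≤ ((2 * |t| + |u|) / √m) ^ 4 := by gcongr
        _ = (2 * |t| + |u|) ^ 4 / (√(m : ℝ) ^ 2) ^ 2 := by rw [div_pow]; ring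
        _ = _ := by rw [hw2]
    refine (sum_le_sum h2).trans ?_
    simp only [sum_const, card_range, nsmul_eq_mul]
    apply le_of_eq
    field_simp

/-- The nonlinear remainder is small in mean, because the sum of the signs has second moment
`m`, which is of smaller order than the normalization `m ^ (3 / 2)`. -/
lemma sum_abs_remF_le {m : ℕ} (hm : 0 < m) (t u : ℝ) :
    (∑ T ∈ (range m).powerset, |remF t u m T.card|) / 2 ^ m ≤ (24 * |t| + 2 * |u|) / √m := by
  have hm' : (1 : ℝ) ≤ m := by exact_mod_cast hm
  have hm0 : (0 : ℝ) < m := by linarith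
  have hw : 0 < √(m : ℝ) := Real.sqrt_pos.2 hm0
  have h3 : √(3 : ℝ) ≤ 2 := by rw [Real.sqrt_le_left (by norm_num)]; norm_num
  have h3' : 0 < √(3 : ℝ) := by positivity
  have h1 : ∀ T ∈ (range m).powerset, |remF t u m T.card|
      ≤ |t| * (8 / (m * √m)) * (m + 1) + |u| * (2 / √m)
        + |t| / (m * √m) * (2 * (T.card : ℝ) - (range m).card) ^ 2 := by
    intro T _
    rw [card_range, remF, sqrt_cube]
    refine (abs_add_le _ _).trans ?_
    rw [abs_mul, abs_mul, abs_of_pos (by positivity : 0 < 2 / √(m : ℝ))]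
    have h4 : |(m + 1 - (2 * (T.card : ℝ) - m) ^ 2 / 8) / (m * √m / (4 * √3))|
        ≤ (m + 1 + (2 * (T.card : ℝ) - m) ^ 2 / 8) * (8 / (m * √m)) := by
      rw [abs_div, abs_of_pos (by positivity : 0 < m * √(m : ℝ) / (4 * √3)), div_div_eq_mul_div,
        ← mul_div_assoc]
      have h5 : |m + 1 - (2 * (T.card : ℝ) - m) ^ 2 / 8|
          ≤ m + 1 + (2 * (T.card : ℝ) - m) ^ 2 / 8 := by
        have := sq_nonneg (2 * (T.card : ℝ) - m)
        rw [abs_le]; constructor <;> linarith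
      gcongr
      linarith
    have h6 := mul_le_mul_of_nonneg_left h4 (abs_nonneg t)
    refine (add_le_add_left h6 _).trans (le_of_eq ?_)
    field_simp
    ring
  refine (div_le_div_of_nonneg_right (sum_le_sum h1) (by positivity)).trans ?_
  rw [sum_add_distrib, ← mul_sum, sum_sq_card]
  simp only [sum_const, card_powerset, card_range, nsmul_eq_mul]
  rw [div_le_iff₀ (by positivity)]
  push_cast
  have h7 : |t| * (8 / (m * √m)) * (m + 1) ≤ |t| * 16 / √m := by
    rw [mul_div_assoc', div_mul_eq_mul_div, div_le_div_iff₀ (by positivity) hw]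
    nlinarith [mul_nonneg (abs_nonneg t) hw.le]
  have h8 : |t| / (m * √m) * (m * 2 ^ m) = |t| / √m * 2 ^ m := by field_simp
  rw [h8]
  have h9 : 2 ^ m * (|t| * (8 / (m * √m)) * (m + 1) + |u| * (2 / √m)) + |t| / √m * 2 ^ m
      ≤ 2 ^ m * (|t| * 16 / √m + |u| * (2 / √m)) + |t| / √m * 2 ^ m := by gcongr
  refine h9.trans ?_
  have h10 : 2 ^ m * (|t| * 16 / √m + |u| * (2 / √m)) + |t| / √m * 2 ^ m
      = (17 * |t| + 2 * |u|) / √m * 2 ^ m := by field_simp; ring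
  rw [h10]
  gcongr
  norm_num

/-- The joint characteristic function of `(X_m, Y_m)` converges to that of the standard
Gaussian on the plane. -/
lemma tendsto_charSum (t u : ℝ) :
    Tendsto (fun m : ℕ => (∑ p ∈ FerrersHP m, Complex.exp
        (((((areaF p : ℝ) - m ^ 2 / 8) / √(m ^ 3 / 48) * t
          + ((heightF p : ℝ) - m / 2) / (√m / 2) * u : ℝ) : ℂ) * Complex.I)) / 2 ^ m)
      atTop (𝓝 ((Real.exp (-(t ^ 2 + u ^ 2) / 2) : ℝ) : ℂ)) := by
  have hinv : Tendsto (fun m : ℕ => (1 : ℝ) / m) atTop (𝓝 0) := tendsto_one_div_atTop_nhds_zero_nat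
  have hsqrt : Tendsto (fun m : ℕ => √(m : ℝ)) atTop atTop :=
    Real.tendsto_sqrt_atTop.comp tendsto_natCast_atTop_atTop
  have hG : Tendsto (fun m : ℕ => Real.exp (-(t ^ 2 * (1 - 1 / (m : ℝ) ^ 2) + u ^ 2) / 2)) atTop
      (𝓝 (Real.exp (-(t ^ 2 + u ^ 2) / 2))) := by
    have h1 : Tendsto (fun m : ℕ => 1 / (m : ℝ) ^ 2) atTop (𝓝 0) := by
      simpa using hinv.pow 2
    have h2 := (((h1.const_sub 1).const_mul (t ^ 2)).add_const (u ^ 2)).neg.div_const 2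
    simpa [Function.comp_def] using (Real.continuous_exp.tendsto _).comp h2
  have hP : Tendsto (fun m : ℕ => ∏ j ∈ range m, Real.cos (coefF t u m j)) atTop
      (𝓝 (Real.exp (-(t ^ 2 + u ^ 2) / 2))) := by
    have hb : Tendsto (fun m : ℕ => (2 * |t| + |u|) ^ 4 / (m : ℝ)) atTop (𝓝 0) :=
      tendsto_const_div_atTop_nhds_zero_nat _
    have hd : Tendsto (fun m : ℕ => ∏ j ∈ range m, Real.cos (coefF t u m j)
        - Real.exp (-(t ^ 2 * (1 - 1 / (m : ℝ) ^ 2) + u ^ 2) / 2)) atTop (𝓝 0) := by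
      refine squeeze_zero_norm' ?_ hb
      filter_upwards [tendsto_natCast_atTop_atTop.eventually_ge_atTop ((2 * |t| + |u|) ^ 2),
        eventually_gt_atTop 0] with m hm hm0
      rw [← sum_coefF_sq hm0]
      exact abs_prod_cos_sub_le t u hm
    simpa using hd.add hG
  have hPc : Tendsto (fun m : ℕ => ((∏ j ∈ range m, Real.cos (coefF t u m j) : ℝ) : ℂ)) atTop
      (𝓝 ((Real.exp (-(t ^ 2 + u ^ 2) / 2) : ℝ) : ℂ)) :=
    (Complex.continuous_ofReal.tendsto _).comp hP
  have hb : Tendsto (fun m : ℕ => (24 * |t| + 2 * |u|) / √(m : ℝ)) atTop (𝓝 0) :=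
    hsqrt.const_div_atTop _
  have hd : Tendsto (fun m : ℕ => (∑ p ∈ FerrersHP m, Complex.exp
        (((((areaF p : ℝ) - m ^ 2 / 8) / √(m ^ 3 / 48) * t
          + ((heightF p : ℝ) - m / 2) / (√m / 2) * u : ℝ) : ℂ) * Complex.I)) / 2 ^ m
        - ((∏ j ∈ range m, Real.cos (coefF t u m j) : ℝ) : ℂ)) atTop (𝓝 0) := by
    refine squeeze_zero_norm' ?_ hb
    filter_upwards [eventually_gt_atTop 0] with m hm
    refine le_trans ?_ (sum_abs_remF_le hm t u)
    have h2 : ((∏ j ∈ range m, Real.cos (coefF t u m j) : ℝ) : ℂ)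
        = (∑ T ∈ (range m).powerset, Complex.exp
          (((∑ j ∈ range m, sgn T j * coefF t u m j : ℝ) : ℂ) * Complex.I)) / 2 ^ m := by
      rw [sum_exp_sgn]
      field_simp
    rw [h2, sum_ferrers, ← sub_div, ← sum_sub_distrib, norm_div]
    have h3 : ‖(2 : ℂ) ^ m‖ = 2 ^ m := by simp
    rw [h3]
    gcongr
    refine norm_sum_le_of_le _ fun T hT => ?_
    rw [stat_eq hm (mem_powerset.1 hT)]
    have h4 : ∀ a b : ℝ, ‖Complex.exp (((a + b : ℝ) : ℂ) * Complex.I)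
        - Complex.exp ((a : ℂ) * Complex.I)‖ ≤ |b| := by
      intro a b
      have h5 : Complex.exp (((a + b : ℝ) : ℂ) * Complex.I) - Complex.exp ((a : ℂ) * Complex.I)
          = Complex.exp ((a : ℂ) * Complex.I) * (Complex.exp (Complex.I * (b : ℂ)) - 1) := by
        rw [mul_sub, ← Complex.exp_add, mul_one]
        congr 2
        push_cast
        ring
      rw [h5, norm_mul, Complex.norm_exp_ofReal_mul_I, one_mul]
      exact Real.norm_exp_I_mul_ofReal_sub_one_le
    exact h4 _ _
  simpa using hd.add hPc

/-! ### Weak convergence -/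

/-- The normalized pair `(X_m, Y_m)` of a diagram, as a point of the Euclidean plane. -/
noncomputable def pointF {m : ℕ} (p : Fin (m + 1) → Fin (m + 2)) : WithLp 2 (ℝ × ℝ) :=
  WithLp.toLp 2 (((areaF p : ℝ) - m ^ 2 / 8) / √(m ^ 3 / 48),
    ((heightF p : ℝ) - m / 2) / (√m / 2))

/-- The law of `(X_m, Y_m)` under the uniform distribution on `FerrersHP m`. -/
noncomputable def lawF (m : ℕ) : Measure (WithLp 2 (ℝ × ℝ)) :=
  ((2 : ENNReal) ^ m)⁻¹ • ∑ p ∈ FerrersHP m, Measure.dirac (pointF p)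

instance (m : ℕ) : IsProbabilityMeasure (lawF m) := by
  constructor
  simp [lawF, card_ferrers]
  exact ENNReal.inv_mul_cancel (by simp) (by simp)

lemma integral_lawF {E : Type*} [NormedAddCommGroup E] [NormedSpace ℝ E] [CompleteSpace E]
    (m : ℕ) (g : WithLp 2 (ℝ × ℝ) → E) :
    ∫ x, g x ∂(lawF m) = ((2 : ℝ) ^ m)⁻¹ • ∑ p ∈ FerrersHP m, g (pointF p) := by
  rw [lawF, integral_smul_measure, integral_finsetSum_measure]
  · simp
  · intro p _
    exact integrable_dirac (by simp)

/-- The standard Gaussian law on the Euclidean plane. -/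
noncomputable def gaussF : Measure (WithLp 2 (ℝ × ℝ)) :=
  ((ProbabilityTheory.gaussianReal 0 1).prod (ProbabilityTheory.gaussianReal 0 1)).map
    (WithLp.toLp 2)

instance : IsProbabilityMeasure gaussF :=
  Measure.isProbabilityMeasure_map (by fun_prop)

/-- `lawF` bundled as a probability measure. -/
noncomputable def lawP (m : ℕ) : ProbabilityMeasure (WithLp 2 (ℝ × ℝ)) :=
  ⟨lawF m, inferInstance⟩

/-- `gaussF` bundled as a probability measure. -/
noncomputable def gaussP : ProbabilityMeasure (WithLp 2 (ℝ × ℝ)) :=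
  ⟨gaussF, inferInstance⟩

/-- Lévy's convergence theorem applied to the laws of `(X_m, Y_m)`. -/
lemma tendsto_lawF :
    Tendsto lawP atTop (𝓝 gaussP) := by
  refine ProbabilityMeasure.tendsto_of_tendsto_charFun fun v => ?_
  change Tendsto (fun m => charFun (lawF m) v) atTop (𝓝 (charFun gaussF v))
  have h1 : charFun gaussF v = ((Real.exp (-(v.fst ^ 2 + v.snd ^ 2) / 2) : ℝ) : ℂ) := by
    rw [gaussF, charFun_prod, ProbabilityTheory.charFun_gaussianReal,
      ProbabilityTheory.charFun_gaussianReal, ← Complex.exp_add]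
    push_cast
    congr 1
    simp
    ring
  rw [h1]
  refine (tendsto_charSum v.fst v.snd).congr fun m => ?_
  rw [charFun_apply, integral_lawF, div_eq_inv_mul]
  rw [Complex.real_smul]
  push_cast
  congr 1
  refine sum_congr rfl fun p _ => ?_
  congr 2
  rw [WithLp.prod_inner_apply]
  simp [pointF]
  ring

/-- Joint central limit law for area and height in the uniform fixed half-perimeter
ensemble of Ferrers diagrams: with `X_m = (A_m − m²/8)/√(m³/48)` and
`Y_m = (H_m − m/2)/(√m/2)`, the pair `(X_m, Y_m)` converges in distribution, as `m → ∞`,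
to the two-dimensional standard normal distribution, i.e. the product of two standard
Gaussian measures on `ℝ`; equivalently, for every bounded continuous test function `f` on
`ℝ × ℝ`, the expectation `E[f(X_m, Y_m)]` converges to the integral of `f` against that
product measure. -/
theorem ferrers_joint_clt :
    ∀ f : BoundedContinuousFunction (ℝ × ℝ) ℝ,
      Tendsto (fun m : ℕ =>
        (∑ p ∈ FerrersHP m,
            f ((((areaF p : ℝ) - m ^ 2 / 8) / Real.sqrt (m ^ 3 / 48),
                ((heightF p : ℝ) - m / 2) / (Real.sqrt m / 2)))) /
          ((FerrersHP m).card : ℝ))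
        atTop
        (nhds (∫ x, f x
          ∂((ProbabilityTheory.gaussianReal 0 1).prod (ProbabilityTheory.gaussianReal 0 1)))) := by
  intro f
  have h := ProbabilityMeasure.tendsto_iff_forall_integral_tendsto.1 tendsto_lawF
    (f.compContinuous ⟨WithLp.ofLp, WithLp.prod_continuous_ofLp 2 ℝ ℝ⟩)
  have hlim : ∫ x, f (WithLp.ofLp x) ∂gaussF = ∫ x, f x
      ∂((ProbabilityTheory.gaussianReal 0 1).prod (ProbabilityTheory.gaussianReal 0 1)) := by
    rw [gaussF, ← MeasurableEquiv.coe_toLp, integral_map_equiv]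
    simp
  rw [← hlim]
  refine h.congr fun m => ?_
  change ∫ x, f (WithLp.ofLp x) ∂(lawF m) = _
  rw [integral_lawF, card_ferrers, div_eq_inv_mul]
  push_cast
  rfl
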